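/- arXiv:1705.03210 — 3 statements merged into one kernel-verified Lean document; each statement's English description precedes it below -/
import Mathlib

section
/- Let G = (V,E) be a finite simple graph endowed with a weight function w : V → ℤ_{>0}, and suppose G is (r,w)-connected for some integer r ≥ 1. Let e = Σ_{v∈V} w(v) be the total weight. Then diam(G) ≤ ⌊(e-2)/r⌋ + 1. -/
/-- A set `X` of vertices *disconnects* a graph `G` if after removing `X` there remain
two vertices that are not connected by a path (this forces `|V| ≥ |X| + 2`). -/
def Disconnects {V : Type*} (G : SimpleGraph V) (X : Set V) : Prop :=
  ∃ u v : (Xᶜ : Set V), ¬ (G.induce Xᶜ).Reachable u v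

/-- `G` is `(r,w)`-connected: the removal of any set of vertices whose weights sum to
at most `r - 1` does not disconnect `G`. -/
def WeightConnected {V : Type*} (G : SimpleGraph V) (r : ℕ) (w : V → ℕ) : Prop :=
  ∀ X : Finset V, (∑ v ∈ X, w v) < r → ¬ Disconnects G (↑X : Set V)

/-!
Fix vertices `u ≠ v` at distance `d`. For `0 < i < d` the sphere of radius `i` around `u` separates
`u` from `v`, so its weight is at least `r`. These `d - 1` spheres are pairwise disjoint and avoid
`u` and `v`, hence `(d - 1) * r + w u + w v ≤ e`.
-/

section

variable {V : Type*} {G : SimpleGraph V} {u v : V}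

theorem disconnects_of_forall_adj {S X : Set V}
    (hS : ∀ ⦃a b⦄, a ∈ S → a ∉ X → b ∉ X → G.Adj a b → b ∈ S)
    (huS : u ∈ S) (huX : u ∉ X) (hvS : v ∉ S) (hvX : v ∉ X) : Disconnects G X := by
  refine ⟨⟨u, huX⟩, ⟨v, hvX⟩, fun ⟨p⟩ ↦ ?_⟩
  obtain ⟨e, -, he_fst, he_snd⟩ := p.exists_boundary_dart (Subtype.val ⁻¹' S) huS hvS
  exact he_snd (hS he_fst e.fst.2 e.snd.2 e.adj)

theorem disconnects_empty_of_not_reachable (h : ¬ G.Reachable u v) : Disconnects G ∅ :=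
  disconnects_of_forall_adj (S := {x | G.Reachable u x})
    (fun _ _ ha _ _ hab ↦ ha.trans hab.reachable) (.refl u) (Set.notMem_empty u)
    h (Set.notMem_empty v)

theorem disconnects_setOf_dist_eq {i : ℕ} (hi : 0 < i) (hiv : i < G.dist u v) :
    Disconnects G {x | G.dist u x = i} := by
  refine disconnects_of_forall_adj (S := {x | G.dist u x < i}) (u := u) (v := v)
    (fun a b ha _ hb hab ↦ ?_) ?_ ?_ hiv.not_gt hiv.ne'
  · have hdist := hab.diff_dist_adj (u := u)
    simp only [Set.mem_ofPred_eq] at ha hb ⊢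
    omega
  · simpa only [Set.mem_ofPred_eq, SimpleGraph.dist_self] using hi
  · simpa only [Set.mem_ofPred_eq, SimpleGraph.dist_self] using hi.ne

namespace WeightConnected

variable {r : ℕ} {w : V → ℕ}

theorem preconnected (h : WeightConnected G r w) (hr : 0 < r) : G.Preconnected := by
  intro u v
  by_contra huv
  refine h ∅ (by rwa [Finset.sum_empty]) ?_
  simpa only [Finset.coe_empty] using disconnects_empty_of_not_reachable huv

theorem le_sum_dist_eq [Fintype V] (h : WeightConnected G r w) {i : ℕ} (hi : 0 < i)
    (hiv : i < G.dist u v) : r ≤ ∑ x with G.dist u x = i, w x := by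
  by_contra! hlt
  refine h _ hlt ?_
  simpa only [Finset.coe_filter_univ] using disconnects_setOf_dist_eq hi hiv

theorem dist_sub_one_mul_add_le_sum [Fintype V] (h : WeightConnected G r w) (huv : u ≠ v) :
    (G.dist u v - 1) * r + (w u + w v) ≤ ∑ x, w x := by
  classical
  let interior : Finset V := {x | G.dist u x ∈ Finset.Ioo 0 (G.dist u v)}
  have hle_interior : (G.dist u v - 1) * r ≤ ∑ x ∈ interior, w x := calc
    (G.dist u v - 1) * r = (Finset.Ioo 0 (G.dist u v)).card • r := by simp
    _ ≤ ∑ i ∈ Finset.Ioo 0 (G.dist u v), ∑ x with G.dist u x = i, w x :=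
      Finset.card_nsmul_le_sum _ _ _ fun i hi ↦
        h.le_sum_dist_eq (Finset.mem_Ioo.mp hi).1 (Finset.mem_Ioo.mp hi).2
    _ = ∑ x ∈ interior, w x := Finset.sum_fiberwise_eq_sum_filter ..
  have hdisjoint : Disjoint interior {u, v} := by simp [interior]
  calc (G.dist u v - 1) * r + (w u + w v)
      ≤ ∑ x ∈ interior, w x + ∑ x ∈ {u, v}, w x := by
        rw [Finset.sum_pair huv]
        gcongr
    _ = ∑ x ∈ interior ∪ {u, v}, w x := (Finset.sum_union hdisjoint).symm
    _ ≤ ∑ x, w x := Finset.sum_le_sum_of_subset (Finset.subset_univ _)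

end WeightConnected

end

/-- If `G` is `(r,w)`-connected with positive weights and `r ≥ 1`,
and `e` is the total weight, then `diam G ≤ ⌊(e-2)/r⌋ + 1`. -/
theorem diam_le_of_weightConnected {V : Type*} [Fintype V] [Nonempty V]
    (G : SimpleGraph V) (w : V → ℕ) (hw : ∀ v, 0 < w v)
    (r : ℕ) (hr : 1 ≤ r) (hconn : WeightConnected G r w) :
    G.ediam ≤ (((∑ v, w v) - 2) / r + 1 : ℕ) := by
  refine SimpleGraph.ediam_le_of_edist_le fun u v ↦ ?_
  rw [← (hconn.preconnected hr u v).coe_dist_eq_edist, Nat.cast_le]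
  obtain rfl | huv := eq_or_ne u v
  · simp
  have hsum := hconn.dist_sub_one_mul_add_le_sum huv
  have hu := hw u
  have hv := hw v
  have hdiv : G.dist u v - 1 ≤ ((∑ x, w x) - 2) / r := (Nat.le_div_iff_mul_le hr).mpr (by omega)
  omega
end

section
/- For all integers r ≥ 1 and e ≥ r + 2, there exists a finite simple graph G on e vertices which is r-connected (equivalently, (r,𝟙)-connected for the constant weight function 𝟙 ≡ 1) and satisfies diam(G) = ⌊(e-2)/r⌋ + 1. In particular, the bound diam(G) ≤ ⌊(e-2)/r⌋ + 1 for (r,w)-connected graphs of total weight e is sharp. -/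
/-- `G` is `l`-connected: it has at least `l` vertices and cannot be disconnected by
removing `l - 1` or fewer vertices. -/
def LConnected {V : Type*} [Fintype V] (G : SimpleGraph V) (l : ℕ) : Prop :=
  l ≤ Fintype.card V ∧ ∀ X : Finset V, X.card < l → ¬ Disconnects G (↑X : Set V)

/-!
The witness is the `r`-th power of the path on `e` vertices, which joins two distinct positions
whenever they differ by at most `r`. A walk of length `k` moves by at most `k * r`, and moving
greedily by `r` attains this, so the distance from `u` to `v` is `⌈|u - v| / r⌉` and the diameter
is `⌈(e - 1) / r⌉ = ⌊(e - 2) / r⌋ + 1`. Deleting fewer than `r` vertices leaves a vertex in every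
window of `r` consecutive positions, so one can still move from left to right in steps of at
most `r`.
-/

/-- The `r`-th power of the path on `n` vertices: distinct vertices are adjacent when their
positions on the path differ by at most `r`. It is the extremal graph of the theorem. The
positions are compared in `ℕ`, since subtraction in `Fin n` wraps around. -/
def pathPower (n r : ℕ) : SimpleGraph (Fin n) where
  Adj u v := u ≠ v ∧ Nat.dist u v ≤ r
  symm := ⟨fun u v h ↦ ⟨h.1.symm, Nat.dist_comm u v ▸ h.2⟩⟩
  loopless := ⟨fun _ h ↦ h.1 rfl⟩

namespace pathPower

variable {n r : ℕ} {u v : Fin n}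

theorem adj_iff : (pathPower n r).Adj u v ↔ u ≠ v ∧ Nat.dist u v ≤ r :=
  Iff.rfl

theorem adj_of_lt_of_le (hlt : u < v) (hle : (v : ℕ) ≤ u + r) : (pathPower n r).Adj u v :=
  adj_iff.mpr ⟨hlt.ne, by rw [Nat.dist_eq_sub_of_le hlt.le]; omega⟩

theorem dist_le_length_mul (p : (pathPower n r).Walk u v) : Nat.dist u v ≤ p.length * r := by
  induction p with
  | nil => simp
  | @cons u w v huw p ih =>
    calc Nat.dist u v ≤ Nat.dist u w + Nat.dist w v := Nat.dist.triangle_inequality ..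
      _ ≤ r + p.length * r := add_le_add huw.2 ih
      _ = (p.cons huw).length * r := by rw [SimpleGraph.Walk.length_cons]; ring

theorem exists_dist_le_and_dist_le {m : ℕ} (h : Nat.dist u v ≤ r + m) :
    ∃ w : Fin n, Nat.dist u w ≤ r ∧ Nat.dist w v ≤ m := by
  -- `w` is the vertex of the window `[u - r, u + r]` closest to `v`.
  refine ⟨⟨max (u - r) (min (u + r) v), by omega⟩, ?_, ?_⟩ <;> simp only [Nat.dist] at h ⊢ <;> omega

theorem edist_le_of_dist_le_mul {k : ℕ} (h : Nat.dist u v ≤ k * r) :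
    (pathPower n r).edist u v ≤ k := by
  induction k generalizing u with
  | zero =>
    have huv : u = v := Fin.ext (Nat.eq_of_dist_eq_zero (by simpa using h))
    simp [huv]
  | succ k ih =>
    obtain ⟨w, huw, hwv⟩ : ∃ w : Fin n, Nat.dist u w ≤ r ∧ Nat.dist w v ≤ k * r :=
      exists_dist_le_and_dist_le (by linarith)
    have huw_edist : (pathPower n r).edist u w ≤ 1 :=
      SimpleGraph.edist_le_one_iff_adj_or_eq.mpr <|
        or_iff_not_imp_right.mpr fun hne ↦ adj_iff.mpr ⟨hne, huw⟩
    calc (pathPower n r).edist u v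
        ≤ (pathPower n r).edist u w + (pathPower n r).edist w v := SimpleGraph.edist_triangle ..
      _ ≤ 1 + k := add_le_add huw_edist (ih hwv)
      _ = (k + 1 : ℕ) := by push_cast; exact add_comm ..

theorem edist_le_iff {k : ℕ} : (pathPower n r).edist u v ≤ k ↔ Nat.dist u v ≤ k * r := by
  refine ⟨fun h ↦ ?_, edist_le_of_dist_le_mul⟩
  obtain ⟨p, hp⟩ := SimpleGraph.exists_walk_of_edist_ne_top (ne_top_of_le_ne_top (by simp) h)
  have hpk : p.length ≤ k := by exact_mod_cast hp.trans_le h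
  exact (dist_le_length_mul p).trans (Nat.mul_le_mul_right r hpk)

theorem ediam_le_iff {k : ℕ} : (pathPower n r).ediam ≤ k ↔ n - 1 ≤ k * r := by
  simp only [SimpleGraph.ediam_le_iff, edist_le_iff, Nat.dist]
  refine ⟨fun h ↦ ?_, fun h u v ↦ by omega⟩
  rcases n.eq_zero_or_pos with rfl | hn
  · simp
  · simpa using h ⟨0, hn⟩ ⟨n - 1, by omega⟩

theorem ediam_eq (hr : 0 < r) : (pathPower n r).ediam = ((n - 1) ⌈/⌉ r : ℕ) := by
  have le_iff (k : ℕ) : (pathPower n r).ediam ≤ k ↔ (n - 1) ⌈/⌉ r ≤ k := by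
    rw [ediam_le_iff, ceilDiv_le_iff_le_mul hr, mul_comm]
  have ediam_le := (le_iff _).mpr le_rfl
  lift (pathPower n r).ediam to ℕ using ne_top_of_le_ne_top (by simp) ediam_le with d
  exact_mod_cast eq_of_forall_ge_iff fun k ↦ by exact_mod_cast le_iff k

theorem exists_notMem_of_card_lt {X : Finset (Fin n)} (hX : X.card < r) (huv : (u : ℕ) + r ≤ v) :
    ∃ w ∉ X, u < w ∧ (w : ℕ) ≤ u + r := by
  let last : Fin n := ⟨u + r, by omega⟩
  have hcard : X.card < (Finset.Ioc u last).card := by simpa [last] using hX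
  obtain ⟨w, hw, hwX⟩ := Finset.exists_mem_notMem_of_card_lt_card hcard
  exact ⟨w, hwX, Finset.mem_Ioc.mp hw⟩

theorem reachable_induce_compl_of_le {X : Finset (Fin n)} (hX : X.card < r)
    {u v : ((X : Set (Fin n))ᶜ : Set (Fin n))} (huv : u ≤ v) :
    ((pathPower n r).induce (X : Set (Fin n))ᶜ).Reachable u v := by
  induction u using WellFoundedGT.induction with
  | ind u ih =>
    rcases huv.eq_or_lt with rfl | hlt
    · rfl
    rcases le_total (v.1 : ℕ) (u.1 + r) with hnear | hfar
    · exact SimpleGraph.Adj.reachable (adj_of_lt_of_le hlt hnear)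
    · obtain ⟨w, hwX, huw, hwr⟩ := exists_notMem_of_card_lt hX hfar
      have hstep : ((pathPower n r).induce (X : Set (Fin n))ᶜ).Adj u ⟨w, hwX⟩ :=
        adj_of_lt_of_le huw hwr
      exact hstep.reachable.trans (ih ⟨w, hwX⟩ huw (hwr.trans hfar))

theorem lConnected (hrn : r ≤ n) : LConnected (pathPower n r) r := by
  refine ⟨by simpa using hrn, fun X hX ⟨u, v, huv⟩ ↦ huv ?_⟩
  rcases le_total u v with h | h
  · exact reachable_induce_compl_of_le hX h
  · exact (reachable_induce_compl_of_le hX h).symm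

end pathPower

theorem sub_one_ceilDiv_eq {n r : ℕ} (hr : 0 < r) (hn : 2 ≤ n) :
    (n - 1) ⌈/⌉ r = (n - 2) / r + 1 := by
  rw [Nat.ceilDiv_eq_add_pred_div, ← Nat.add_div_right _ hr]
  congr 1
  omega

/-- For all integers `r ≥ 1` and `e ≥ r + 2` there is a graph on `e`
vertices which is `r`-connected (i.e. `(r, 𝟙)`-connected for the constant weight `1`)
and whose diameter is exactly `⌊(e-2)/r⌋ + 1`; so the bound of Proposition `bound`
is sharp. -/
theorem exists_rConnected_diam_eq (r e : ℕ) (hr : 1 ≤ r) (he : r + 2 ≤ e) :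
    ∃ G : SimpleGraph (Fin e), LConnected G r ∧ G.ediam = ((e - 2) / r + 1 : ℕ) := by
  refine ⟨pathPower e r, pathPower.lConnected (by omega), ?_⟩
  rw [pathPower.ediam_eq hr, sub_one_ceilDiv_eq hr (by omega)]
end

section
/- Let k be a field, m ≥ 1, and in S = k[x_1,…,x_{2m}] consider the monomial ideal J = ( x_i x_{m+k} : 1 ≤ i < k ≤ m ). Then J admits the primary decomposition J = ⋂_{k=1}^{m} (x_1,…,x_{k-1}, x_{m+k+1},…,x_{2m}); in particular the minimal primes of J are exactly the prime ideals p_k = (x_1,…,x_{k-1}, x_{m+k+1},…,x_{2m}) for k = 1,…,m. -/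
/-- In `S = k[x_1, …, x_{2m}]`, realized as `MvPolynomial (Fin m ⊕ Fin m) k` with
`x_i = X (Sum.inl (i-1))` for `1 ≤ i ≤ m` and `x_{m+j} = X (Sum.inr (j-1))` for
`1 ≤ j ≤ m`, the monomial ideal `J = (x_i x_{m+j} : 1 ≤ i < j ≤ m)`. -/
noncomputable def Jideal (k : Type*) [Field k] (m : ℕ) :
    Ideal (MvPolynomial (Fin m ⊕ Fin m) k) :=
  Ideal.span {q | ∃ i j : Fin m, i < j ∧
    q = MvPolynomial.X (Sum.inl i) * MvPolynomial.X (Sum.inr j)}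

/-- The prime ideal `p_t = (x_1, …, x_{t-1}, x_{m+t+1}, …, x_{2m})`, i.e. generated by
the variables `X (Sum.inl i)` for `i < t` together with `X (Sum.inr j)` for `j > t`
(zero-based indexing `t : Fin m`). -/
noncomputable def pIdeal (k : Type*) [Field k] (m : ℕ) (t : Fin m) :
    Ideal (MvPolynomial (Fin m ⊕ Fin m) k) :=
  Ideal.span ({q | ∃ i : Fin m, i < t ∧ q = MvPolynomial.X (Sum.inl i)} ∪
    {q | ∃ j : Fin m, t < j ∧ q = MvPolynomial.X (Sum.inr j)})

/-!
A monomial lies in a squarefree monomial ideal when its support contains an edge of the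
hypergraph of generators, and in an ideal generated by variables when its support meets that set
of variables. So the decomposition says that a finite set `A ⊆ ι ⊕ ι` contains a pair
`{inl i, inr j}` with `i < j` iff it meets every cut `inl (-∞, t) ∪ inr (t, ∞)`. If `A` meets
every cut, then the cut at an upper bound of the right part forces the left part to be nonempty,
and the cut at the least `i` of the left part yields the required `j > i`. The ideals of the cuts
are pairwise incomparable primes, so they are the minimal primes of their finite intersection.
-/

open MvPolynomial

section MinimalPrimes

variable {R κ : Type*} [CommSemiring R] [Finite κ]

theorem exists_le_of_iInf_le_of_isPrime {P : κ → Ideal R} {Q : Ideal R} (hQ : Q.IsPrime)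
    (h : ⨅ t, P t ≤ Q) : ∃ t, P t ≤ Q := by
  have := Fintype.ofFinite κ
  rw [← Finset.inf_univ_eq_iInf, hQ.inf_le'] at h
  simpa using h

theorem minimalPrimes_iInf_eq_range {P : κ → Ideal R} (hP : ∀ t, (P t).IsPrime)
    (hanti : IsAntichain (· ≤ ·) (Set.range P)) :
    (⨅ t, P t).minimalPrimes = Set.range P := by
  ext Q
  constructor
  · intro hQ
    obtain ⟨t, ht⟩ := exists_le_of_iInf_le_of_isPrime hQ.isPrime hQ.le
    exact ⟨t, ht.antisymm (hQ.2 ⟨hP t, iInf_le P t⟩ ht)⟩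
  · rintro ⟨t, rfl⟩
    refine ⟨⟨hP t, iInf_le P t⟩, fun Q ⟨hQ, hle⟩ hQt ↦ ?_⟩
    obtain ⟨s, hs⟩ := exists_le_of_iInf_le_of_isPrime hQ hle
    rwa [← hanti.eq ⟨s, rfl⟩ ⟨t, rfl⟩ (hs.trans hQt)]

end MinimalPrimes

section VariableIdeals

variable {σ R : Type*}

theorem X_mem_span_X_image_iff [CommSemiring R] [Nontrivial R] {s : Set σ} {v : σ} :
    (X v : MvPolynomial σ R) ∈ Ideal.span (X '' s) ↔ v ∈ s := by
  classical
  simp [mem_ideal_span_X_image, support_X, Finsupp.single_apply]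

theorem span_X_image_le_span_X_image_iff [CommSemiring R] [Nontrivial R] {s t : Set σ} :
    Ideal.span (X '' s) ≤ Ideal.span (X '' t : Set (MvPolynomial σ R)) ↔ s ⊆ t := by
  simp [Ideal.span_le, Set.subset_def, X_mem_span_X_image_iff]

theorem ker_killCompl_compl [CommRing R] (s : Set σ) :
    RingHom.ker (killCompl (R := R) (Subtype.val_injective (p := (· ∈ sᶜ)))) =
      Ideal.span (X '' s) := by
  set φ := killCompl (R := R) (Subtype.val_injective (p := (· ∈ sᶜ)))
  have φ_X_of_mem {v : σ} (hv : v ∈ s) : φ (X v) = 0 := by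
    simp [φ, killCompl, hv]
  have φ_X_of_notMem {v : σ} (hv : v ∉ s) : φ (X v) = X ⟨v, hv⟩ := by
    rw [← killCompl_rename_app Subtype.val_injective (X ⟨v, hv⟩), rename_X]
  apply le_antisymm
  · intro f hf
    -- `rename ∘ φ` is the identity modulo the variables in `s`.
    have mk_comp : ((Ideal.Quotient.mkₐ R (Ideal.span (X '' s))).comp (rename (↑))).comp φ =
        Ideal.Quotient.mkₐ R (Ideal.span (X '' s)) := by
      ext v
      by_cases hv : v ∈ s
      · simpa [φ_X_of_mem hv, eq_comm] using
          Ideal.Quotient.eq_zero_iff_mem.2 (Ideal.subset_span (Set.mem_image_of_mem X hv))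
      · simp [φ_X_of_notMem hv]
    have mk_f := DFunLike.congr_fun mk_comp f
    rw [← Ideal.Quotient.eq_zero_iff_mem]
    simpa [RingHom.mem_ker.1 hf, eq_comm] using mk_f
  · rw [Ideal.span_le]
    rintro _ ⟨v, hv, rfl⟩
    exact φ_X_of_mem hv

theorem isPrime_span_X_image [CommRing R] [IsDomain R] (s : Set σ) :
    (Ideal.span (X '' s : Set (MvPolynomial σ R))).IsPrime :=
  ker_killCompl_compl (R := R) s ▸ RingHom.ker_isPrime _

end VariableIdeals

section EdgeIdeals

variable {σ κ : Type*} (R : Type*) [CommSemiring R]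

/-- The edge ideal of the hypergraph with set of edges `E`, generated by the squarefree monomials
`∏ v ∈ e, X v` for `e ∈ E`. -/
noncomputable def edgeIdeal (E : Set (Finset σ)) : Ideal (MvPolynomial σ R) :=
  Ideal.span ((fun e ↦ ∏ v ∈ e, X v) '' E)

variable {R}

theorem mem_edgeIdeal_iff {E : Set (Finset σ)} {f : MvPolynomial σ R} :
    f ∈ edgeIdeal R E ↔ ∀ d ∈ f.support, ∃ e ∈ E, e ⊆ d.support := by
  classical
  have prod_X (e : Finset σ) : (∏ v ∈ e, X v : MvPolynomial σ R) =
      monomial (Finsupp.indicator e fun _ _ ↦ 1) 1 := by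
    simpa using prod_X_pow (R := R) (fun _ ↦ 1) e
  have indicator_le (e : Finset σ) (d : σ →₀ ℕ) :
      (Finsupp.indicator e fun _ _ ↦ 1) ≤ d ↔ e ⊆ d.support := by
    refine forall_congr' fun v ↦ ?_
    by_cases hv : v ∈ e <;> simp [Finsupp.indicator_apply, hv, Nat.one_le_iff_ne_zero]
  rw [edgeIdeal, funext prod_X,
    ← Set.image_image (fun d : σ →₀ ℕ ↦ monomial d (1 : R)) (Finsupp.indicator · fun _ _ ↦ 1),
    mem_ideal_span_monomial_image]
  simp only [Set.exists_mem_image, indicator_le]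

theorem edgeIdeal_eq_iInf_span_X_image {E : Set (Finset σ)} {c : κ → Set σ}
    (h : ∀ A : Finset σ, (∃ e ∈ E, e ⊆ A) ↔ ∀ t, ∃ v ∈ c t, v ∈ A) :
    edgeIdeal R E = ⨅ t, Ideal.span (X '' c t) := by
  ext f
  simp only [mem_edgeIdeal_iff, h, Ideal.mem_iInf, mem_ideal_span_X_image, Finsupp.mem_support_iff]
  exact ⟨fun hf t d hd ↦ hf d hd t, fun hf d hd t ↦ hf t d hd⟩

end EdgeIdeals

section Cuts

variable {ι : Type*} [LinearOrder ι]

variable (ι) in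
/-- The edges `{inl i, inr j}` with `i < j` of a bipartite graph on two copies of `ι`, whose
edge ideal generalizes `Jideal`. -/
def ltEdges : Set (Finset (ι ⊕ ι)) :=
  {e | ∃ i j, i < j ∧ e = {Sum.inl i, Sum.inr j}}

/-- The cut of `ι ⊕ ι` at `t`, a vertex cover of `ltEdges ι`; its variables generate the
generalization of `pIdeal`. -/
def cut (t : ι) : Set (ι ⊕ ι) :=
  Sum.inl '' Set.Iio t ∪ Sum.inr '' Set.Ioi t

@[simp]
theorem inl_mem_cut {i t : ι} : Sum.inl i ∈ cut t ↔ i < t := by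
  simp [cut]

@[simp]
theorem inr_mem_cut {j t : ι} : Sum.inr j ∈ cut t ↔ t < j := by
  simp [cut]

theorem eq_of_cut_subset_cut {s t : ι} (h : cut s ⊆ cut t) : s = t := by
  refine le_antisymm (not_lt.1 fun hts ↦ ?_) (not_lt.1 fun hst ↦ ?_)
  · exact lt_irrefl t (inl_mem_cut.1 (h (inl_mem_cut.2 hts)))
  · exact lt_irrefl t (inr_mem_cut.1 (h (inr_mem_cut.2 hst)))

theorem exists_ltEdges_subset_iff [Nonempty ι] (A : Finset (ι ⊕ ι)) :
    (∃ e ∈ ltEdges ι, e ⊆ A) ↔ ∀ t, ∃ v ∈ cut t, v ∈ A := by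
  constructor
  · rintro ⟨_, ⟨i, j, hij, rfl⟩, hA⟩ t
    obtain hit | hti := lt_or_ge i t
    · exact ⟨Sum.inl i, inl_mem_cut.2 hit, hA (by simp)⟩
    · exact ⟨Sum.inr j, inr_mem_cut.2 (hti.trans_lt hij), hA (by simp)⟩
  · intro h
    have left_nonempty : A.toLeft.Nonempty := by
      obtain ⟨b, hb⟩ := A.toRight.exists_le
      obtain ⟨i | j, hv, hA⟩ := h b
      · exact ⟨i, Finset.mem_toLeft.2 hA⟩
      · exact absurd (inr_mem_cut.1 hv) (hb j (Finset.mem_toRight.2 hA)).not_gt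
    obtain ⟨i, hi⟩ := A.toLeft.exists_minimal left_nonempty
    obtain ⟨i' | j, hv, hA⟩ := h i
    · exact absurd (inl_mem_cut.1 hv) (hi.not_lt (Finset.mem_toLeft.2 hA))
    · exact ⟨_, ⟨i, j, inr_mem_cut.1 hv, rfl⟩,
        by simp [Finset.insert_subset_iff, hA, Finset.mem_toLeft.1 hi.prop]⟩

theorem isAntichain_range_span_X_image_cut (R : Type*) [CommSemiring R] [Nontrivial R] :
    IsAntichain (· ≤ ·)
      (Set.range fun t : ι ↦ (Ideal.span (X '' cut t) : Ideal (MvPolynomial (ι ⊕ ι) R))) := by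
  rintro _ ⟨s, rfl⟩ _ ⟨t, rfl⟩ hne hle
  exact hne (by rw [eq_of_cut_subset_cut (span_X_image_le_span_X_image_iff.1 hle)])

end Cuts

theorem Jideal_decomposition_general (R ι : Type*) [CommRing R] [IsDomain R] [LinearOrder ι]
    [Finite ι] [Nonempty ι] :
    (edgeIdeal R (ltEdges ι) = ⨅ t, Ideal.span (X '' cut t)) ∧
      (edgeIdeal R (ltEdges ι)).minimalPrimes = Set.range fun t ↦ Ideal.span (X '' cut t) := by
  have decomposition : edgeIdeal R (ltEdges ι) = ⨅ t, Ideal.span (X '' cut t) :=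
    edgeIdeal_eq_iInf_span_X_image exists_ltEdges_subset_iff
  refine ⟨decomposition, ?_⟩
  rw [decomposition]
  exact minimalPrimes_iInf_eq_range (fun t ↦ isPrime_span_X_image (cut t))
    (isAntichain_range_span_X_image_cut R)

theorem Jideal_eq_edgeIdeal (k : Type*) [Field k] (m : ℕ) :
    Jideal k m = edgeIdeal k (ltEdges (Fin m)) := by
  rw [Jideal, edgeIdeal]
  congr 1
  ext q
  constructor
  · rintro ⟨i, j, hij, rfl⟩
    exact ⟨_, ⟨i, j, hij, rfl⟩, by simp⟩
  · rintro ⟨_, ⟨i, j, hij, rfl⟩, rfl⟩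
    exact ⟨i, j, hij, by simp⟩

theorem pIdeal_eq_span_X_image_cut (k : Type*) [Field k] (m : ℕ) (t : Fin m) :
    pIdeal k m t = Ideal.span (X '' cut t) := by
  rw [pIdeal, cut, Set.image_union, Set.image_image, Set.image_image]
  simp only [Set.image, Set.mem_Iio, Set.mem_Ioi, eq_comm]

/-- For `m ≥ 1`, the ideal `J = (x_i x_{m+j} : 1 ≤ i < j ≤ m)` of
`k[x_1, …, x_{2m}]` admits the primary decomposition `J = ⋂_{t=1}^m p_t`, and its
minimal primes are exactly the `p_t`. -/
theorem Jideal_decomposition {k : Type*} [Field k] (m : ℕ) (hm : 1 ≤ m) :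
    (Jideal k m = ⨅ t : Fin m, pIdeal k m t) ∧
      (Jideal k m).minimalPrimes = Set.range (pIdeal k m) := by
  have : Nonempty (Fin m) := ⟨⟨0, hm⟩⟩
  rw [Jideal_eq_edgeIdeal, funext (pIdeal_eq_span_X_image_cut k m)]
  exact Jideal_decomposition_general k (Fin m)
end
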